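/- Let X_1, X_2, … be i.i.d. isotropic random vectors in ℝ^d (centered with identity covariance) whose common law ν_1 has finite Poincaré constant, and let ν_n be the law of (1/√n) Σ_{i=1}^n X_i. Then for every n ≥ 0, C_p(ν_{2^n}) − 3/2 ≤ (3/4)^n (C_p(ν_1) − 3/2). -/

import Mathlib

open MeasureTheory ProbabilityTheory ENNReal

/-- The Poincaré constant of a Borel probability measure on `ℝ^d`: the smallest constant `C`
such that `Var_μ(f) ≤ C ∫ |∇f|² dμ` for all locally Lipschitz `f : ℝ^d → ℝ`
(`+∞` if no finite constant works). -/
noncomputable def poincareConst {d : ℕ} (μ : Measure (EuclideanSpace ℝ (Fin d))) : ℝ≥0∞ :=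
  sInf {C : ℝ≥0∞ | ∀ f : EuclideanSpace ℝ (Fin d) → ℝ, LocallyLipschitz f →
    evariance f μ ≤ C * ∫⁻ x, ‖gradient f x‖₊ ^ 2 ∂μ}

/-- The law of the standardized sum `(1/√n) ∑_{i=1}^n X_i` of `n` i.i.d. random vectors with
common law `ν₁`. -/
noncomputable def stdSumLaw {d : ℕ} (ν₁ : Measure (EuclideanSpace ℝ (Fin d))) (n : ℕ) :
    Measure (EuclideanSpace ℝ (Fin d)) :=
  Measure.map (fun x : Fin n → EuclideanSpace ℝ (Fin d) => (Real.sqrt n)⁻¹ • ∑ i, x i)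
    (Measure.pi fun _ : Fin n => ν₁)

/-- A probability measure on `ℝ^d` is isotropic if it has finite second moments, is centered,
and has identity covariance matrix. -/
def IsIsotropic {d : ℕ} (μ : Measure (EuclideanSpace ℝ (Fin d))) : Prop :=
  Integrable (fun x => ‖x‖ ^ 2) μ ∧ (∫ x, x ∂μ) = 0 ∧
    ∀ i j : Fin d, ∫ x, x i * x j ∂μ = if i = j then (1 : ℝ) else 0

theorem LocallyLipschitz.add_real {α : Type*} [PseudoEMetricSpace α] {u v : α → ℝ}
    (hu : LocallyLipschitz u) (hv : LocallyLipschitz v) :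
    LocallyLipschitz fun x => u x + v x := by
  intro x
  obtain ⟨K, s, hs, hK⟩ := hu x
  obtain ⟨L, t, ht, hL⟩ := hv x
  exact ⟨K + L, s ∩ t, Filter.inter_mem hs ht,
    (hK.mono Set.inter_subset_left).add (hL.mono Set.inter_subset_right)⟩

theorem LocallyLipschitz.const_mul_real {α : Type*} [PseudoEMetricSpace α] {u : α → ℝ}
    (hu : LocallyLipschitz u) (c : ℝ) : LocallyLipschitz fun x => c * u x :=
  (lipschitzWith_smul c).locallyLipschitz.comp hu

theorem MeasureTheory.MemLp.ofReal_integral_norm_sq {α F : Type*} [MeasurableSpace α]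
    [NormedAddCommGroup F] {ν : Measure α} {f : α → F} (hf : MemLp f 2 ν) :
    ENNReal.ofReal (∫ x, ‖f x‖ ^ 2 ∂ν) = ∫⁻ x, ‖f x‖₊ ^ 2 ∂ν := by
  rw [ofReal_integral_eq_lintegral_ofReal ((memLp_two_iff_integrable_sq_norm hf.1).1 hf)
    (Filter.Eventually.of_forall fun x => by positivity)]
  refine lintegral_congr fun x => ?_
  rw [ENNReal.ofReal_pow (norm_nonneg _), ofReal_norm]
  rfl

theorem MeasureTheory.memLp_two_iff_lintegral_ne_top {α F : Type*} [MeasurableSpace α]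
    [NormedAddCommGroup F] {ν : Measure α} {f : α → F} (hf : AEStronglyMeasurable f ν) :
    MemLp f 2 ν ↔ ∫⁻ x, ‖f x‖₊ ^ 2 ∂ν ≠ ∞ := by
  have hm : AEStronglyMeasurable (fun x => ‖f x‖ ^ 2) ν := hf.norm.pow 2
  rw [memLp_two_iff_integrable_sq_norm hf, Integrable, and_iff_right hm,
    hasFiniteIntegral_iff_enorm, lt_top_iff_ne_top]
  simp [enorm_eq_nnnorm]

theorem MeasureTheory.Lp.norm_sq_eq_integral {α F : Type*} [MeasurableSpace α]
    [NormedAddCommGroup F] [InnerProductSpace ℝ F] {ν : Measure α} (f : Lp F 2 ν) :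
    ‖f‖ ^ 2 = ∫ x, ‖f x‖ ^ 2 ∂ν := by
  rw [← real_inner_self_eq_norm_sq, L2.inner_def]
  simp

theorem MeasureTheory.Lp.variance_eq {α : Type*} [MeasurableSpace α] {ν : Measure α}
    [IsProbabilityMeasure ν] (f : Lp ℝ 2 ν) :
    Var[f; ν] = ‖f‖ ^ 2 - (inner ℝ (indicatorConstLp 2 MeasurableSet.univ
      (measure_ne_top ν Set.univ) (1 : ℝ)) f) ^ 2 := by
  rw [variance_eq_sub (Lp.memLp f), Lp.norm_sq_eq_integral, L2.inner_indicatorConstLp_one]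
  simp

section SquareIntegrable

variable {α β F : Type*} [MeasurableSpace α] [MeasurableSpace β] [NormedAddCommGroup F]
  [InnerProductSpace ℝ F] {μ : Measure α} {ρ : Measure β}

theorem MeasureTheory.MemLp.integrable_inner {f g : α → F} (hf : MemLp f 2 μ)
    (hg : MemLp g 2 μ) : Integrable (fun x => inner ℝ (f x) (g x)) μ := by
  refine (hf.norm.integrable_mul hg.norm).mono' (hf.1.inner hg.1)
    (Filter.Eventually.of_forall fun x => ?_)
  exact norm_inner_le_norm (f x) (g x)

omit [InnerProductSpace ℝ F] in
theorem MeasureTheory.MemLp.integrable_norm_sq {f : α → F} (hf : MemLp f 2 μ) :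
    Integrable (fun x => ‖f x‖ ^ 2) μ :=
  (memLp_two_iff_integrable_sq_norm hf.1).1 hf

omit [InnerProductSpace ℝ F] in
theorem MeasureTheory.MemLp.ae_memLp_right [SFinite ρ] [SFinite μ] {f : α → β → F}
    (hf : MemLp (Function.uncurry f) 2 (μ.prod ρ)) : ∀ᵐ x ∂μ, MemLp (f x) 2 ρ := by
  filter_upwards [hf.1.prodMk_left, hf.integrable_norm_sq.prod_right_ae] with x h1 h2
  exact (memLp_two_iff_integrable_sq_norm h1).2 h2

variable [CompleteSpace F]

theorem integral_norm_sub_integral_sq [IsProbabilityMeasure μ] {f : α → F} (hf : MemLp f 2 μ) :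
    ∫ x, ‖f x - ∫ y, f y ∂μ‖ ^ 2 ∂μ = ∫ x, ‖f x‖ ^ 2 ∂μ - ‖∫ x, f x ∂μ‖ ^ 2 := by
  have hi := hf.integrable one_le_two
  have h2 : Integrable (fun x => 2 * inner ℝ (f x) (∫ y, f y ∂μ)) μ :=
    (hi.inner_const _).const_mul 2
  have h3 : Integrable (fun x => ‖f x‖ ^ 2 - 2 * inner ℝ (f x) (∫ y, f y ∂μ)) μ :=
    hf.integrable_norm_sq.sub h2
  simp_rw [norm_sub_sq_real]
  rw [integral_add h3 (integrable_const _), integral_sub hf.integrable_norm_sq h2,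
    integral_const_mul]
  have : ∫ x, inner ℝ (f x) (∫ y, f y ∂μ) ∂μ = ‖∫ y, f y ∂μ‖ ^ 2 := by
    simp_rw [real_inner_comm (∫ y, f y ∂μ)]
    rw [integral_inner hi, real_inner_self_eq_norm_sq]
  rw [this]
  simp
  ring

theorem norm_integral_sq_le [IsProbabilityMeasure μ] {f : α → F} (hf : MemLp f 2 μ) :
    ‖∫ x, f x ∂μ‖ ^ 2 ≤ ∫ x, ‖f x‖ ^ 2 ∂μ := by
  have h := integral_norm_sub_integral_sq hf
  have : 0 ≤ ∫ x, ‖f x - ∫ y, f y ∂μ‖ ^ 2 ∂μ := integral_nonneg fun x => by positivity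
  linarith

theorem MeasureTheory.MemLp.integral_right [SFinite μ] [IsProbabilityMeasure ρ] {f : α → β → F}
    (hf : MemLp (Function.uncurry f) 2 (μ.prod ρ)) : MemLp (fun x => ∫ y, f x y ∂ρ) 2 μ := by
  have hm : AEStronglyMeasurable (fun x => ∫ y, f x y ∂ρ) μ := hf.1.integral_prod_right'
  refine (memLp_two_iff_integrable_sq_norm hm).2
    (hf.integrable_norm_sq.integral_prod_left.mono' (hm.norm.pow 2) ?_)
  filter_upwards [hf.ae_memLp_right] with x hx
  rw [Real.norm_of_nonneg (by positivity)]
  exact norm_integral_sq_le hx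

theorem integral_integral_norm_sub_sq [SFinite μ] [IsProbabilityMeasure ρ] {f : α → β → F}
    (hf : MemLp (Function.uncurry f) 2 (μ.prod ρ)) :
    ∫ x, ∫ y, ‖f x y - ∫ z, f x z ∂ρ‖ ^ 2 ∂ρ ∂μ =
      ∫ x, ∫ y, ‖f x y‖ ^ 2 ∂ρ ∂μ - ∫ x, ‖∫ y, f x y ∂ρ‖ ^ 2 ∂μ := by
  have hi : Integrable (fun x => ∫ y, ‖f x y‖ ^ 2 ∂ρ) μ :=
    hf.integrable_norm_sq.integral_prod_left
  rw [← integral_sub hi hf.integral_right.integrable_norm_sq]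
  refine integral_congr_ae ?_
  filter_upwards [hf.ae_memLp_right] with x hx
  exact integral_norm_sub_integral_sq hx

end SquareIntegrable

section WeakGradient

variable {E : Type*} [NormedAddCommGroup E] [InnerProductSpace ℝ E] [FiniteDimensional ℝ E]
  [MeasurableSpace E] [BorelSpace E] {μ : Measure E}

theorem measurable_gradient (f : E → ℝ) : Measurable (gradient f) :=
  (InnerProductSpace.toDual ℝ E).symm.continuous.measurable.comp (measurable_fderiv ℝ f)

/-- The Poincaré inequality with constant `C`, for locally Lipschitz functions of finite energy. -/
def PoincareInequality (μ : Measure E) (C : ℝ) : Prop :=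
  ∀ f : E → ℝ, LocallyLipschitz f → ∫⁻ x, ‖gradient f x‖₊ ^ 2 ∂μ ≠ ∞ →
    evariance f μ ≤ ENNReal.ofReal C * ∫⁻ x, ‖gradient f x‖₊ ^ 2 ∂μ

/-- `G` agrees `μ`-almost everywhere with the gradient of `u` on the set where the locally
Lipschitz function `u` is differentiable; it is arbitrary elsewhere. -/
def IsPseudoGradient (μ : Measure E) (u : E → ℝ) (G : E → E) : Prop :=
  LocallyLipschitz u ∧ ∀ᵐ x ∂μ, DifferentiableAt ℝ u x → HasGradientAt u (G x) x

theorem IsPseudoGradient.countable_exceptions [IsFiniteMeasure μ] {u v : E → ℝ}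
    {G K : E → E} (hu : IsPseudoGradient μ u G) (hv : IsPseudoGradient μ v K) :
    {t : ℝ | ¬ IsPseudoGradient μ (fun x => u x + t * v x) (fun x => G x + t • K x)}.Countable := by
  let B : ℝ → Set E := fun t =>
    {x | DifferentiableAt ℝ (fun x => u x + t * v x) x} \ {x | DifferentiableAt ℝ v x}
  have hB : ∀ t, MeasurableSet (B t) := fun t =>
    (measurableSet_of_differentiableAt ℝ _).diff (measurableSet_of_differentiableAt ℝ _)
  have hd : Pairwise (Function.onFun Disjoint B) := by
    intro s t hst
    refine Set.disjoint_left.2 fun x hs ht => hs.2 ?_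
    have h := (hs.1.sub ht.1).const_mul (s - t)⁻¹
    refine h.congr_of_eventuallyEq (Filter.Eventually.of_forall fun y => ?_)
    have : s - t ≠ 0 := sub_ne_zero.2 hst
    simp only [Pi.sub_apply]
    field_simp
    ring
  refine (Measure.countable_meas_pos_of_disjoint_iUnion (μ := μ) hB hd).mono fun t ht => ?_
  by_contra h
  refine ht ⟨hu.1.add_real (hv.1.const_mul_real t), ?_⟩
  have h0 : μ (B t) = 0 := by simpa using h
  filter_upwards [hu.2, hv.2, measure_eq_zero_iff_ae_notMem.1 h0] with x h1 h2 h3 hx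
  have hdv : DifferentiableAt ℝ v x := by
    by_contra hn
    exact h3 ⟨hx, hn⟩
  have hdu : DifferentiableAt ℝ u x := by
    refine (hx.sub (hdv.const_mul t)).congr_of_eventuallyEq
      (Filter.Eventually.of_forall fun y => ?_)
    simp
  have e1 := (h1 hdu).hasFDerivAt
  have e2 := ((h2 hdv).hasFDerivAt).const_mul t
  rw [hasGradientAt_iff_hasFDerivAt]
  rw [map_add, map_smul]
  exact e1.add e2

omit [BorelSpace E] in
theorem IsPseudoGradient.const_smul {u : E → ℝ} {G : E → E} (hu : IsPseudoGradient μ u G)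
    (c : ℝ) : IsPseudoGradient μ (fun x => c * u x) (fun x => c • G x) := by
  refine ⟨hu.1.const_mul_real c, ?_⟩
  filter_upwards [hu.2] with x hx hd
  rw [hasGradientAt_iff_hasFDerivAt, map_smul]
  rcases eq_or_ne c 0 with rfl | hc
  · simpa using hasFDerivAt_const (0 : ℝ) x
  · refine (hx ?_).hasFDerivAt.const_mul c
    refine (hd.const_mul c⁻¹).congr_of_eventuallyEq (Filter.Eventually.of_forall fun y => ?_)
    simp only
    field_simp

omit [BorelSpace E] in
theorem IsPseudoGradient.lintegral_le {u : E → ℝ} {G : E → E} (hu : IsPseudoGradient μ u G) :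
    ∫⁻ x, ‖gradient u x‖₊ ^ 2 ∂μ ≤ ∫⁻ x, ‖G x‖₊ ^ 2 ∂μ := by
  refine lintegral_mono_ae ?_
  filter_upwards [hu.2] with x hx
  by_cases hd : DifferentiableAt ℝ u x
  · rw [(hx hd).gradient]
  · simp [gradient_eq_zero_of_not_differentiableAt hd]

omit [BorelSpace E] in
theorem IsPseudoGradient.variance_le [IsProbabilityMeasure μ] {C : ℝ} (hC : 0 ≤ C)
    (hP : PoincareInequality μ C) {u : E → ℝ} {G : E → E} (hu : IsPseudoGradient μ u G)
    (hu2 : MemLp u 2 μ) (hG : MemLp G 2 μ) :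
    Var[u; μ] ≤ C * ∫ x, ‖G x‖ ^ 2 ∂μ := by
  have hfin := (memLp_two_iff_lintegral_ne_top hG.1).1 hG
  have h := hP u hu.1 (ne_top_of_le_ne_top hfin hu.lintegral_le)
  rw [← ENNReal.ofReal_le_ofReal_iff (by positivity), hu2.ofReal_variance_eq,
    ENNReal.ofReal_mul hC, hG.ofReal_integral_norm_sq]
  exact h.trans (mul_le_mul_right hu.lintegral_le _)

/-- Pairs in `L² × L²` represented by a locally Lipschitz function and a pseudo-gradient. -/
def pseudoGradientGraph (μ : Measure E) : Set (WithLp 2 (Lp ℝ 2 μ × Lp E 2 μ)) :=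
  {w | ∃ u G, IsPseudoGradient μ u G ∧ w.fst =ᵐ[μ] u ∧ w.snd =ᵐ[μ] G}

theorem add_mem_closure_pseudoGradientGraph [IsFiniteMeasure μ]
    {w z : WithLp 2 (Lp ℝ 2 μ × Lp E 2 μ)} (hw : w ∈ pseudoGradientGraph μ)
    (hz : z ∈ pseudoGradientGraph μ) : w + z ∈ closure (pseudoGradientGraph μ) := by
  obtain ⟨u, G, hu, hw1, hw2⟩ := hw
  obtain ⟨v, K, hv, hz1, hz2⟩ := hz
  have hdense := (hu.countable_exceptions hv).dense_compl ℝ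
  have h1 : (1 : ℝ) ∈ closure
      {t : ℝ | ¬ IsPseudoGradient μ (fun x => u x + t * v x) (fun x => G x + t • K x)}ᶜ := by
    rw [hdense.closure_eq]
    trivial
  have hcont : Continuous fun t : ℝ => w + t • z := by fun_prop
  have := map_mem_closure hcont h1 (t := pseudoGradientGraph μ) ?_
  · simpa using this
  · intro t ht
    refine ⟨_, _, not_not.1 ht, ?_, ?_⟩
    · rw [WithLp.add_fst, WithLp.smul_fst]
      filter_upwards [Lp.coeFn_add w.fst (t • z.fst), Lp.coeFn_smul t z.fst, hw1, hz1]
        with x h1 h2 h3 h4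
      rw [h1, Pi.add_apply, h2, Pi.smul_apply, h3, h4, smul_eq_mul]
    · rw [WithLp.add_snd, WithLp.smul_snd]
      filter_upwards [Lp.coeFn_add w.snd (t • z.snd), Lp.coeFn_smul t z.snd, hw2, hz2]
        with x h1 h2 h3 h4
      rw [h1, Pi.add_apply, h2, Pi.smul_apply, h3, h4]

/-- The closed linear space of functions paired with a generalized gradient: the closure of the
graph of pseudo-gradients in `L² × L²`. -/
noncomputable def gradientGraph (μ : Measure E) [IsFiniteMeasure μ] :
    Submodule ℝ (WithLp 2 (Lp ℝ 2 μ × Lp E 2 μ)) where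
  carrier := closure (pseudoGradientGraph μ)
  zero_mem' := by
    refine subset_closure ⟨fun _ => 0, fun _ => 0, ⟨(LipschitzWith.const 0).locallyLipschitz,
      Filter.Eventually.of_forall fun x _ => ?_⟩, ?_, ?_⟩
    · rw [hasGradientAt_iff_hasFDerivAt, map_zero]
      exact hasFDerivAt_const (0 : ℝ) x
    · exact Lp.coeFn_zero ℝ 2 μ
    · exact Lp.coeFn_zero E 2 μ
  add_mem' := by
    intro a b ha hb
    have := map_mem_closure₂ (continuous_add (M := WithLp 2 (Lp ℝ 2 μ × Lp E 2 μ))) ha hb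
      (u := closure (pseudoGradientGraph μ))
      fun a ha b hb => add_mem_closure_pseudoGradientGraph ha hb
    rwa [closure_closure] at this
  smul_mem' := by
    intro c a ha
    refine map_mem_closure (f := fun a => c • a) (by fun_prop) ha ?_
    rintro w ⟨u, G, hu, hw1, hw2⟩
    refine ⟨_, _, hu.const_smul c, ?_, ?_⟩
    · rw [WithLp.smul_fst]
      filter_upwards [Lp.coeFn_smul c w.fst, hw1] with x h1 h2
      simp [h1, h2]
    · rw [WithLp.smul_snd]
      filter_upwards [Lp.coeFn_smul c w.snd, hw2] with x h1 h2
      simp [h1, h2]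

theorem isClosed_gradientGraph (μ : Measure E) [IsFiniteMeasure μ] :
    IsClosed (gradientGraph μ : Set (WithLp 2 (Lp ℝ 2 μ × Lp E 2 μ))) :=
  isClosed_closure

theorem variance_le_of_mem_gradientGraph [IsProbabilityMeasure μ] {C : ℝ} (hC : 0 ≤ C)
    (hP : PoincareInequality μ C) {w : WithLp 2 (Lp ℝ 2 μ × Lp E 2 μ)}
    (hw : w ∈ gradientGraph μ) : Var[w.fst; μ] ≤ C * ‖w.snd‖ ^ 2 := by
  rw [Lp.variance_eq]
  have hcl : IsClosed {w : WithLp 2 (Lp ℝ 2 μ × Lp E 2 μ) |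
      ‖w.fst‖ ^ 2 - (inner ℝ (indicatorConstLp 2 MeasurableSet.univ
      (measure_ne_top μ Set.univ) (1 : ℝ)) w.fst) ^ 2 ≤ C * ‖w.snd‖ ^ 2} := by
    have h1 : Continuous fun w : WithLp 2 (Lp ℝ 2 μ × Lp E 2 μ) => w.fst :=
      continuous_fst.comp (WithLp.prod_continuous_ofLp 2 _ _)
    have h2 : Continuous fun w : WithLp 2 (Lp ℝ 2 μ × Lp E 2 μ) => w.snd :=
      continuous_snd.comp (WithLp.prod_continuous_ofLp 2 _ _)
    exact isClosed_le (by fun_prop) (by fun_prop)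
  refine closure_minimal ?_ hcl hw
  rintro w ⟨u, G, hu, hw1, hw2⟩
  have hn : ∫ x, ‖w.snd x‖ ^ 2 ∂μ = ∫ x, ‖G x‖ ^ 2 ∂μ :=
    integral_congr_ae (hw2.mono fun x hx => by simp only [hx])
  rw [Set.mem_ofPred_eq, ← Lp.variance_eq, variance_congr hw1, Lp.norm_sq_eq_integral, hn]
  exact hu.variance_le hC hP ((memLp_congr_ae hw1).1 (Lp.memLp _))
    ((memLp_congr_ae hw2).1 (Lp.memLp _))

/-- `G` is a generalized gradient of `u`: the pair belongs to the closed gradient graph. -/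
def HasWeakGradient (μ : Measure E) [IsFiniteMeasure μ] (u : E → ℝ) (G : E → E) : Prop :=
  ∃ w ∈ gradientGraph μ, w.fst =ᵐ[μ] u ∧ w.snd =ᵐ[μ] G

theorem IsPseudoGradient.hasWeakGradient [IsFiniteMeasure μ] {u : E → ℝ} {G : E → E}
    (h : IsPseudoGradient μ u G) (hu : MemLp u 2 μ) (hG : MemLp G 2 μ) :
    HasWeakGradient μ u G :=
  ⟨WithLp.toLp 2 (hu.toLp u, hG.toLp G), subset_closure ⟨u, G, h, hu.coeFn_toLp, hG.coeFn_toLp⟩,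
    hu.coeFn_toLp, hG.coeFn_toLp⟩

theorem HasWeakGradient.sub [IsFiniteMeasure μ] {u v : E → ℝ} {G K : E → E}
    (hu : HasWeakGradient μ u G) (hv : HasWeakGradient μ v K) :
    HasWeakGradient μ (fun x => u x - v x) (fun x => G x - K x) := by
  obtain ⟨w, hw, hw1, hw2⟩ := hu
  obtain ⟨z, hz, hz1, hz2⟩ := hv
  refine ⟨w - z, sub_mem hw hz, ?_, ?_⟩
  · rw [WithLp.sub_fst]
    filter_upwards [Lp.coeFn_sub w.fst z.fst, hw1, hz1] with x h1 h2 h3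
    rw [h1, Pi.sub_apply, h2, h3]
  · rw [WithLp.sub_snd]
    filter_upwards [Lp.coeFn_sub w.snd z.snd, hw2, hz2] with x h1 h2 h3
    rw [h1, Pi.sub_apply, h2, h3]

theorem HasWeakGradient.variance_le [IsProbabilityMeasure μ] {C : ℝ} (hC : 0 ≤ C)
    (hP : PoincareInequality μ C) {u : E → ℝ} {G : E → E} (h : HasWeakGradient μ u G) :
    Var[u; μ] ≤ C * ∫ x, ‖G x‖ ^ 2 ∂μ := by
  obtain ⟨w, hw, hw1, hw2⟩ := h
  have hn : ∫ x, ‖w.snd x‖ ^ 2 ∂μ = ∫ x, ‖G x‖ ^ 2 ∂μ :=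
    integral_congr_ae (hw2.mono fun x hx => by simp only [hx])
  rw [← variance_congr hw1, ← hn, ← Lp.norm_sq_eq_integral]
  exact variance_le_of_mem_gradientGraph hC hP hw

/-- Generalized gradients commute with averaging over a parameter. -/
theorem HasWeakGradient.integral [IsFiniteMeasure μ] {β : Type*} [MeasurableSpace β]
    {ρ : Measure β} [IsProbabilityMeasure ρ] {U : E → β → ℝ} {V : E → β → E}
    (hU : MemLp (Function.uncurry U) 2 (μ.prod ρ)) (hV : MemLp (Function.uncurry V) 2 (μ.prod ρ))
    (h : ∀ᵐ y ∂ρ, HasWeakGradient μ (fun x => U x y) (fun x => V x y)) :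
    HasWeakGradient μ (fun x => ∫ y, U x y ∂ρ) (fun x => ∫ y, V x y ∂ρ) := by
  have hg := hU.integral_right
  have hK := hV.integral_right
  refine ⟨WithLp.toLp 2 (hg.toLp _, hK.toLp _), ?_, hg.coeFn_toLp, hK.coeFn_toLp⟩
  have : CompleteSpace (gradientGraph μ) := (isClosed_gradientGraph μ).completeSpace_coe
  rw [← (gradientGraph μ).orthogonal_orthogonal, Submodule.mem_orthogonal]
  intro q hq
  rw [Submodule.mem_orthogonal] at hq
  have hq1 := (Lp.memLp q.fst).comp_fst ρ
  have hq2 := (Lp.memLp q.snd).comp_fst ρ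
  have hi1 : Integrable (fun p : E × β => inner ℝ (q.fst p.1) (U p.1 p.2)) (μ.prod ρ) :=
    MemLp.integrable_inner hq1 hU
  have hi2 : Integrable (fun p : E × β => inner ℝ (q.snd p.1) (V p.1 p.2)) (μ.prod ρ) :=
    MemLp.integrable_inner hq2 hV
  have key : ∫ x, ∫ y, (inner ℝ (q.fst x) (U x y) + inner ℝ (q.snd x) (V x y)) ∂ρ ∂μ = 0 := by
    rw [integral_integral_swap (hi1.add hi2)]
    refine integral_eq_zero_of_ae ?_
    filter_upwards [h, hi1.prod_left_ae, hi2.prod_left_ae] with y ⟨w, hw, hw1, hw2⟩ hy1 hy2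
    have h0 := hq w hw
    rw [real_inner_comm, WithLp.prod_inner_apply, L2.inner_def, L2.inner_def] at h0
    rw [integral_add hy1 hy2, Pi.zero_apply, ← h0]
    congr 1
    · exact integral_congr_ae (hw1.mono fun x hx => by simp only [← hx]; rfl)
    · exact integral_congr_ae (hw2.mono fun x hx => by simp only [← hx]; rfl)
  rw [WithLp.prod_inner_apply, L2.inner_def, L2.inner_def, ← key]
  have e : ∀ᵐ x ∂μ, ∫ y, (inner ℝ (q.fst x) (U x y) + inner ℝ (q.snd x) (V x y)) ∂ρ =
      inner ℝ (q.fst x) (∫ y, U x y ∂ρ) + inner ℝ (q.snd x) (∫ y, V x y ∂ρ) := by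
    filter_upwards [hi1.prod_right_ae, hi2.prod_right_ae, hU.ae_memLp_right, hV.ae_memLp_right]
      with x h1 h2 h3 h4
    rw [integral_add h1 h2, integral_inner (h3.integrable one_le_two),
      integral_inner (h4.integrable one_le_two)]
  rw [integral_congr_ae e, integral_add ((Lp.memLp q.fst).integrable_inner hg)
    ((Lp.memLp q.snd).integrable_inner hK)]
  congr 1
  · exact integral_congr_ae (hg.coeFn_toLp.mono fun x hx => by simp only [← hx]; rfl)
  · exact integral_congr_ae (hK.coeFn_toLp.mono fun x hx => by simp only [← hx]; rfl)

/-- Two-point variance bound for a symmetric function of two independent variables. -/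
theorem symmetric_variance_bound [IsProbabilityMeasure μ] {C : ℝ} (hC : 0 ≤ C)
    (hP : PoincareInequality μ C) {U : E → E → ℝ} {V : E → E → E}
    (hU : MemLp (Function.uncurry U) 2 (μ.prod μ)) (hV : MemLp (Function.uncurry V) 2 (μ.prod μ))
    (hUs : ∀ x y, U x y = U y x) (hVs : ∀ x y, V x y = V y x)
    (h : ∀ᵐ y ∂μ, HasWeakGradient μ (fun x => U x y) (fun x => V x y)) :
    ∫ x, ∫ y, ‖U x y‖ ^ 2 ∂μ ∂μ - ‖∫ x, ∫ y, U x y ∂μ ∂μ‖ ^ 2 ≤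
      C * (3 / 2 * ∫ x, ∫ y, ‖V x y‖ ^ 2 ∂μ ∂μ + 1 / 2 * ‖∫ x, ∫ y, V x y ∂μ ∂μ‖ ^ 2) := by
  have hgK := HasWeakGradient.integral hU hV h
  have hg := hU.integral_right
  have hK := hV.integral_right
  have hUg : MemLp (fun p : E × E => U p.1 p.2 - ∫ z, U p.1 z ∂μ) 2 (μ.prod μ) :=
    MemLp.sub hU (hg.comp_fst μ)
  have hVK : MemLp (fun p : E × E => V p.1 p.2 - ∫ z, V p.1 z ∂μ) 2 (μ.prod μ) :=
    MemLp.sub hV (hK.comp_fst μ)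
  have hUg' : MemLp (fun p : E × E => U p.2 p.1 - ∫ z, U p.2 z ∂μ) 2 (μ.prod μ) :=
    hUg.comp_measurePreserving Measure.measurePreserving_swap
  have hVK' : MemLp (fun p : E × E => V p.2 p.1 - ∫ z, V p.2 z ∂μ) 2 (μ.prod μ) :=
    hVK.comp_measurePreserving Measure.measurePreserving_swap
  have hUsl := MemLp.ae_memLp_right (f := fun y x => U x y - ∫ z, U x z ∂μ) hUg'
  have hVsl := MemLp.ae_memLp_right (f := fun y x => V x y - ∫ z, V x z ∂μ) hVK'
  have meanU : ∀ᵐ y ∂μ, ∫ x, (U x y - ∫ z, U x z ∂μ) ∂μ =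
      ∫ z, U y z ∂μ - ∫ x, ∫ z, U x z ∂μ ∂μ := by
    filter_upwards [hU.ae_memLp_right] with y hy
    simp_rw [fun x => hUs x y]
    exact integral_sub (hy.integrable one_le_two) (hg.integrable one_le_two)
  have meanV : ∀ᵐ y ∂μ, ∫ x, (V x y - ∫ z, V x z ∂μ) ∂μ =
      ∫ z, V y z ∂μ - ∫ x, ∫ z, V x z ∂μ ∂μ := by
    filter_upwards [hV.ae_memLp_right] with y hy
    simp_rw [fun x => hVs x y]
    exact integral_sub (hy.integrable one_le_two) (hK.integrable one_le_two)
  have iU : Integrable (fun y => ∫ x, ‖U x y - ∫ z, U x z ∂μ‖ ^ 2 ∂μ) μ :=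
    hUg'.integrable_norm_sq.integral_prod_left
  have iV : Integrable (fun y => ∫ x, ‖V x y - ∫ z, V x z ∂μ‖ ^ 2 ∂μ) μ :=
    hVK'.integrable_norm_sq.integral_prod_left
  have ig : Integrable (fun y => ‖∫ z, U y z ∂μ - ∫ x, ∫ z, U x z ∂μ ∂μ‖ ^ 2) μ :=
    (hg.sub (memLp_const (∫ x, ∫ z, U x z ∂μ ∂μ))).integrable_norm_sq
  have iK : Integrable (fun y => ‖∫ z, V y z ∂μ - ∫ x, ∫ z, V x z ∂μ ∂μ‖ ^ 2) μ :=
    (hK.sub (memLp_const (∫ x, ∫ z, V x z ∂μ ∂μ))).integrable_norm_sq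
  have eU : ∫ y, ∫ x, ‖U x y - ∫ z, U x z ∂μ‖ ^ 2 ∂μ ∂μ =
      ∫ x, ∫ y, ‖U x y‖ ^ 2 ∂μ ∂μ - ∫ x, ‖∫ y, U x y ∂μ‖ ^ 2 ∂μ := by
    rw [← integral_integral_norm_sub_sq hU]
    exact integral_integral_swap hUg'.integrable_norm_sq
  have eV : ∫ y, ∫ x, ‖V x y - ∫ z, V x z ∂μ‖ ^ 2 ∂μ ∂μ =
      ∫ x, ∫ y, ‖V x y‖ ^ 2 ∂μ ∂μ - ∫ x, ‖∫ y, V x y ∂μ‖ ^ 2 ∂μ := by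
    rw [← integral_integral_norm_sub_sq hV]
    exact integral_integral_swap hVK'.integrable_norm_sq
  have slice : ∫ y, ∫ x, ‖U x y - ∫ z, U x z ∂μ‖ ^ 2 ∂μ ∂μ -
      ∫ y, ‖∫ z, U y z ∂μ - ∫ x, ∫ z, U x z ∂μ ∂μ‖ ^ 2 ∂μ ≤
      C * ∫ y, ∫ x, ‖V x y - ∫ z, V x z ∂μ‖ ^ 2 ∂μ ∂μ := by
    rw [← integral_const_mul, ← integral_sub iU ig]
    refine integral_mono_ae (iU.sub ig) (iV.const_mul C) ?_
    filter_upwards [h, hUsl, meanU] with y h1 h2 h3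
    have h4 := (h1.sub hgK).variance_le hC hP
    rw [variance_eq_sub h2, h3] at h4
    simpa using h4
  have average : ∫ x, ‖∫ y, U x y ∂μ‖ ^ 2 ∂μ - ‖∫ x, ∫ y, U x y ∂μ ∂μ‖ ^ 2 ≤
      C * ∫ x, ‖∫ y, V x y ∂μ‖ ^ 2 ∂μ := by
    have h4 := hgK.variance_le hC hP
    rw [variance_eq_sub hg] at h4
    simpa using h4
  have jensen : ∫ y, ‖∫ z, V y z ∂μ - ∫ x, ∫ z, V x z ∂μ ∂μ‖ ^ 2 ∂μ ≤
      ∫ y, ∫ x, ‖V x y - ∫ z, V x z ∂μ‖ ^ 2 ∂μ ∂μ := by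
    refine integral_mono_ae iK iV ?_
    filter_upwards [hVsl, meanV] with y h1 h2
    have := norm_integral_sq_le h1
    rwa [h2] at this
  rw [integral_norm_sub_integral_sq hg] at slice
  rw [integral_norm_sub_integral_sq hK] at jensen
  rw [eU, eV] at slice
  rw [eV] at jensen
  nlinarith [mul_le_mul_of_nonneg_left jensen hC]

omit [BorelSpace E] in
theorem memLp_of_lintegral_evariance_ne_top [IsProbabilityMeasure μ] {U : E → E → ℝ}
    (hm : Measurable (Function.uncurry U)) (hUs : ∀ x y, U x y = U y x)
    (h : ∫⁻ y, evariance (fun x => U x y) μ ∂μ ≠ ∞) :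
    MemLp (Function.uncurry U) 2 (μ.prod μ) := by
  have hg : StronglyMeasurable fun y => ∫ x, U x y ∂μ :=
    hm.stronglyMeasurable.integral_prod_left'
  have h1m : Measurable fun p : E × E => U p.1 p.2 - ∫ x, U x p.2 ∂μ :=
    hm.sub (hg.measurable.comp measurable_snd)
  have h1 : MemLp (fun p : E × E => U p.1 p.2 - ∫ x, U x p.2 ∂μ) 2 (μ.prod μ) := by
    rw [memLp_two_iff_lintegral_ne_top h1m.aestronglyMeasurable,
      lintegral_prod_symm' _ (by fun_prop)]
    exact h
  have h2 : MemLp (fun p : E × E => U p.2 p.1 - ∫ x, U x p.1 ∂μ) 2 (μ.prod μ) :=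
    h1.comp_measurePreserving Measure.measurePreserving_swap
  have h3 : MemLp (Function.uncurry fun x y : E => ∫ z, U z y ∂μ - ∫ z, U z x ∂μ) 2
      (μ.prod μ) := by
    refine (h2.sub h1).ae_eq (Filter.Eventually.of_forall fun p => ?_)
    simp [Function.uncurry, hUs p.2 p.1]
  obtain ⟨x, hx⟩ := h3.ae_memLp_right.exists
  have h4 : MemLp (fun y => ∫ z, U z y ∂μ) 2 μ := by
    refine (hx.add (memLp_const (∫ z, U z x ∂μ))).ae_eq (Filter.Eventually.of_forall fun y => ?_)
    simp
  refine (h1.add (h4.comp_snd μ)).ae_eq (Filter.Eventually.of_forall fun p => ?_)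
  simp [Function.uncurry]

/-- The law of `(X + Y) / √2` for `X`, `Y` independent with law `μ`. -/
noncomputable def doubling (μ : Measure E) : Measure E :=
  (μ.prod μ).map fun p => (√2)⁻¹ • (p.1 + p.2)

theorem measurable_doubling_map : Measurable fun p : E × E => (√2)⁻¹ • (p.1 + p.2) := by
  fun_prop

instance [IsProbabilityMeasure μ] : IsProbabilityMeasure (doubling μ) :=
  Measure.isProbabilityMeasure_map measurable_doubling_map.aemeasurable

omit [BorelSpace E] in
theorem isPseudoGradient_comp_smul_add {f : E → ℝ} (hf : LocallyLipschitz f) {c : ℝ} (hc : c ≠ 0)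
    (y : E) :
    IsPseudoGradient μ (fun x => f (c • (x + y))) (fun x => c • gradient f (c • (x + y))) := by
  refine ⟨hf.comp (f := f) (g := fun x => c • (x + y)) ?_,
    Filter.Eventually.of_forall fun x hx => ?_⟩
  · exact ((lipschitzWith_smul c).comp
      ((LipschitzWith.id).add (LipschitzWith.const y))).locallyLipschitz
  have hd : DifferentiableAt ℝ f (c • (x + y)) := by
    have e : f = (fun x => f (c • (x + y))) ∘ fun z => c⁻¹ • z - y := by
      ext z
      rw [Function.comp_apply, sub_add_cancel, smul_inv_smul₀ hc]
    rw [e]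
    refine DifferentiableAt.comp _ ?_ (by fun_prop)
    rwa [smul_smul, inv_mul_cancel₀ hc, one_smul, add_sub_cancel_right]
  have h1 : HasFDerivAt (fun x : E => c • (x + y)) (c • ContinuousLinearMap.id ℝ E) x :=
    ((hasFDerivAt_id x).add_const y).const_smul c
  have h2 := hd.hasGradientAt.hasFDerivAt.comp x h1
  rw [hasGradientAt_iff_hasFDerivAt, map_smul]
  refine h2.congr_fderiv ?_
  ext z
  simp

theorem doubling_variance_bound [IsProbabilityMeasure μ] {C : ℝ} (hC : 0 ≤ C)
    (hP : PoincareInequality μ C) {f : E → ℝ} (hf : LocallyLipschitz f)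
    (hD : ∫⁻ x, ‖gradient f x‖₊ ^ 2 ∂(doubling μ) ≠ ∞) :
    MemLp f 2 (doubling μ) ∧
      Var[f; doubling μ] ≤ C * (3 / 4 * ∫ x, ‖gradient f x‖ ^ 2 ∂(doubling μ) +
        1 / 4 * ‖∫ x, gradient f x ∂(doubling μ)‖ ^ 2) := by
  have hφ : Measurable fun p : E × E => (√2)⁻¹ • (p.1 + p.2) := measurable_doubling_map
  have hc : (√2)⁻¹ ≠ 0 := by positivity
  have hc2 : ‖(√2)⁻¹‖ ^ 2 = 1 / 2 := by simp
  have hGm := measurable_gradient f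
  have hG : MemLp (gradient f) 2 (doubling μ) :=
    (memLp_two_iff_lintegral_ne_top hGm.aestronglyMeasurable).2 hD
  have hG' : MemLp (fun p : E × E => gradient f ((√2)⁻¹ • (p.1 + p.2))) 2 (μ.prod μ) :=
    (memLp_map_measure_iff hGm.aestronglyMeasurable hφ.aemeasurable).1 hG
  have hV : MemLp (Function.uncurry fun x y : E => (√2)⁻¹ • gradient f ((√2)⁻¹ • (x + y))) 2
      (μ.prod μ) := hG'.const_smul _
  have hpg := fun y => isPseudoGradient_comp_smul_add (μ := μ) hf hc y
  have hfm : Measurable f := hf.continuous.measurable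
  have hVs : ∀ᵐ y ∂μ, MemLp (fun x => (√2)⁻¹ • gradient f ((√2)⁻¹ • (x + y))) 2 μ := by
    filter_upwards [hV.ae_memLp_right] with y hy
    simpa only [add_comm y] using hy
  have hU : MemLp (Function.uncurry fun x y : E => f ((√2)⁻¹ • (x + y))) 2 (μ.prod μ) := by
    refine memLp_of_lintegral_evariance_ne_top (hfm.comp hφ) (fun x y => by rw [add_comm]) ?_
    have hb : ∀ᵐ y ∂μ, evariance (fun x => f ((√2)⁻¹ • (x + y))) μ ≤ ENNReal.ofReal C *
        ∫⁻ x, ‖(√2)⁻¹ • gradient f ((√2)⁻¹ • (x + y))‖₊ ^ 2 ∂μ := by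
      filter_upwards [hVs] with y hy
      have hle := (hpg y).lintegral_le
      exact (hP _ (hpg y).1 (ne_top_of_le_ne_top
        ((memLp_two_iff_lintegral_ne_top hy.1).1 hy) hle)).trans (mul_le_mul_right hle _)
    refine ne_top_of_le_ne_top ?_ (lintegral_mono_ae hb)
    rw [lintegral_const_mul' _ _ ENNReal.ofReal_ne_top]
    refine ENNReal.mul_ne_top ENNReal.ofReal_ne_top ?_
    have h2 := (memLp_two_iff_lintegral_ne_top hV.1).1 hV
    rw [lintegral_prod_symm' _ (by fun_prop)] at h2
    exact h2
  have hf2 : MemLp f 2 (doubling μ) :=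
    (memLp_map_measure_iff hfm.aestronglyMeasurable hφ.aemeasurable).2 hU
  refine ⟨hf2, ?_⟩
  have hUsl : ∀ᵐ y ∂μ, MemLp (fun x => f ((√2)⁻¹ • (x + y))) 2 μ := by
    filter_upwards [hU.ae_memLp_right] with y hy
    simpa only [add_comm y] using hy
  have key := symmetric_variance_bound hC hP hU hV (fun x y => by rw [add_comm])
    (fun x y => by rw [add_comm]) (by
      filter_upwards [hUsl, hVs] with y h1 h2
      exact (hpg y).hasWeakGradient h1 h2)
  have e1 : ∫ x, ∫ y, ‖f ((√2)⁻¹ • (x + y))‖ ^ 2 ∂μ ∂μ = ∫ z, ‖f z‖ ^ 2 ∂(doubling μ) := by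
    rw [doubling, integral_map hφ.aemeasurable (hfm.norm.pow_const 2).aestronglyMeasurable]
    exact integral_integral hU.integrable_norm_sq
  have e2 : ∫ x, ∫ y, f ((√2)⁻¹ • (x + y)) ∂μ ∂μ = ∫ z, f z ∂(doubling μ) := by
    rw [doubling, integral_map hφ.aemeasurable hfm.aestronglyMeasurable]
    exact integral_integral (hU.integrable one_le_two)
  have e3 : ∫ x, ∫ y, ‖(√2)⁻¹ • gradient f ((√2)⁻¹ • (x + y))‖ ^ 2 ∂μ ∂μ =
      1 / 2 * ∫ z, ‖gradient f z‖ ^ 2 ∂(doubling μ) := by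
    rw [doubling, integral_map hφ.aemeasurable (hGm.norm.pow_const 2).aestronglyMeasurable,
      ← integral_integral (f := fun x y => ‖gradient f ((√2)⁻¹ • (x + y))‖ ^ 2)
        hG'.integrable_norm_sq]
    simp_rw [norm_smul, mul_pow, hc2, integral_const_mul]
  have e4 : ∫ x, ∫ y, (√2)⁻¹ • gradient f ((√2)⁻¹ • (x + y)) ∂μ ∂μ =
      (√2)⁻¹ • ∫ z, gradient f z ∂(doubling μ) := by
    rw [doubling, integral_map hφ.aemeasurable hGm.aestronglyMeasurable,
      ← integral_integral (f := fun x y => gradient f ((√2)⁻¹ • (x + y)))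
        (hG'.integrable one_le_two)]
    simp_rw [integral_smul]
  rw [e1, e2, e3, e4, norm_smul, mul_pow, hc2] at key
  rw [variance_eq_sub hf2]
  simp only [Real.norm_eq_abs, sq_abs] at key
  refine key.trans (le_of_eq ?_)
  ring

end WeakGradient

section Euclidean

variable {d : ℕ} {μ : Measure (EuclideanSpace ℝ (Fin d))}

theorem poincareInequality_toReal (hp : poincareConst μ ≠ ⊤) :
    PoincareInequality μ (poincareConst μ).toReal := by
  intro f hf hD
  rw [ENNReal.ofReal_toReal hp]
  rcases eq_or_ne (∫⁻ x, ‖gradient f x‖₊ ^ 2 ∂μ) 0 with h0 | h0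
  · rw [poincareConst, Ne, sInf_eq_top] at hp
    push Not at hp
    obtain ⟨C, hC, -⟩ := hp
    simpa [h0] using hC f hf
  · rw [← ENNReal.div_le_iff_le_mul (Or.inl h0) (Or.inl hD)]
    refine le_sInf fun C hC => ?_
    rw [ENNReal.div_le_iff_le_mul (Or.inl h0) (Or.inl hD)]
    exact hC f hf

theorem poincareConst_le_ofReal {K : ℝ} (hK : 0 < K) (h : PoincareInequality μ K) :
    poincareConst μ ≤ ENNReal.ofReal K := by
  refine sInf_le fun f hf => ?_
  by_cases hD : ∫⁻ x, ‖gradient f x‖₊ ^ 2 ∂μ = ∞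
  · rw [hD, ENNReal.mul_top (by simpa using hK)]
    exact le_top
  · exact h f hf hD

theorem exists_variance_gt_of_lt_poincareConst {K : ℝ} (hK : 0 < K)
    (h : ENNReal.ofReal K < poincareConst μ) :
    ∃ f, LocallyLipschitz f ∧ ∫⁻ x, ‖gradient f x‖₊ ^ 2 ∂μ ≠ ∞ ∧
      ENNReal.ofReal K * ∫⁻ x, ‖gradient f x‖₊ ^ 2 ∂μ < evariance f μ := by
  by_contra! hn
  exact absurd h (not_lt.2 (poincareConst_le_ofReal hK hn))

theorem IsIsotropic.memLp_id (h : IsIsotropic μ) : MemLp id 2 μ :=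
  (memLp_two_iff_integrable_sq_norm aestronglyMeasurable_id).2 h.1

theorem MeasureTheory.MemLp.euclidean_apply {α : Type*} [MeasurableSpace α] {ν : Measure α}
    {X : α → EuclideanSpace ℝ (Fin d)} (hX : MemLp X 2 ν) (i : Fin d) :
    MemLp (fun a => X a i) 2 ν :=
  (EuclideanSpace.proj (𝕜 := ℝ) i).comp_memLp' hX

theorem IsIsotropic.memLp_inner (h : IsIsotropic μ) (b : EuclideanSpace ℝ (Fin d)) :
    MemLp (fun x => inner ℝ b x) 2 μ :=
  (innerSL ℝ b).comp_memLp' h.memLp_id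

theorem IsIsotropic.variance_inner [IsProbabilityMeasure μ] (h : IsIsotropic μ)
    (b : EuclideanSpace ℝ (Fin d)) : Var[fun x => inner ℝ b x; μ] = ‖b‖ ^ 2 := by
  have hi := h.memLp_id.integrable one_le_two
  rw [variance_eq_sub (h.memLp_inner b)]
  have hm : ∫ x, inner ℝ b x ∂μ = 0 := by
    rw [integral_inner (f := fun x => x) hi b, h.2.1, inner_zero_right]
  have hij : ∀ i j : Fin d, Integrable (fun x : EuclideanSpace ℝ (Fin d) => x i * x j) μ :=
    fun i j => (h.memLp_id.euclidean_apply i).integrable_mul (h.memLp_id.euclidean_apply j)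
  have hs : ∀ x : EuclideanSpace ℝ (Fin d), (inner ℝ b x) ^ 2 =
      ∑ i, ∑ j, b i * b j * (x i * x j) := by
    intro x
    simp only [PiLp.inner_apply, RCLike.inner_apply, conj_trivial, sq, Finset.sum_mul_sum]
    exact Finset.sum_congr rfl fun i _ => Finset.sum_congr rfl fun j _ => by ring
  simp only [Pi.pow_apply, hm, hs]
  rw [integral_finsetSum _ fun i _ => integrable_finsetSum _ fun j _ => (hij i j).const_mul _]
  simp_rw [integral_finsetSum Finset.univ fun j _ => (hij _ j).const_mul _, integral_const_mul,
    h.2.2]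
  simp [EuclideanSpace.real_norm_sq_eq, ← sq]

theorem variance_add_mul [IsProbabilityMeasure μ] {u v : EuclideanSpace ℝ (Fin d) → ℝ}
    (hu : MemLp u 2 μ) (hv : MemLp v 2 μ) (t : ℝ) :
    Var[fun x => u x + t * v x; μ] =
      Var[u; μ] + 2 * t * cov[u, v; μ] + t ^ 2 * Var[v; μ] := by
  have := variance_fun_add hu (hv.const_mul t)
  rw [this, variance_const_mul, covariance_const_mul_right]
  ring

theorem variance_add_linear_le [IsProbabilityMeasure μ] (h : IsIsotropic μ) {K : ℝ} (hK : 0 ≤ K)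
    (hP : PoincareInequality μ K) {f : EuclideanSpace ℝ (Fin d) → ℝ} (hf : LocallyLipschitz f)
    (hf2 : MemLp f 2 μ) (hG : MemLp (gradient f) 2 μ) {b : EuclideanSpace ℝ (Fin d)}
    (hb : ∫ x, gradient f x ∂μ = b) (t : ℝ) :
    Var[f; μ] + 2 * t * cov[f, fun x => inner ℝ b x; μ] + t ^ 2 * ‖b‖ ^ 2 ≤
      K * (∫ x, ‖gradient f x‖ ^ 2 ∂μ + 2 * t * ‖b‖ ^ 2 + t ^ 2 * ‖b‖ ^ 2) := by
  have hlin : ∀ x, HasFDerivAt (fun x => t * inner ℝ b x) (t • innerSL ℝ b) x := fun x =>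
    ((innerSL ℝ b).hasFDerivAt (x := x)).const_mul t
  have hpg : IsPseudoGradient μ (fun x => f x + t * inner ℝ b x)
      (fun x => gradient f x + t • b) := by
    refine ⟨hf.add_real (((innerSL ℝ b).lipschitz.locallyLipschitz).const_mul_real t),
      Filter.Eventually.of_forall fun x hx => ?_⟩
    have hd : DifferentiableAt ℝ f x := by
      refine (hx.sub (hlin x).differentiableAt).congr_of_eventuallyEq
        (Filter.Eventually.of_forall fun y => ?_)
      simp
    rw [hasGradientAt_iff_hasFDerivAt]
    refine (hd.hasGradientAt.hasFDerivAt.add (hlin x)).congr_fderiv ?_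
    ext z
    simp
  have key := hpg.variance_le hK hP (hf2.add ((h.memLp_inner b).const_mul t))
    (hG.add (memLp_const (t • b)))
  rw [variance_add_mul hf2 (h.memLp_inner b), h.variance_inner] at key
  refine key.trans (le_of_eq ?_)
  congr 1
  have hi := hG.integrable one_le_two
  have h2 : Integrable (fun x => 2 * inner ℝ (gradient f x) (t • b)) μ :=
    (hi.inner_const _).const_mul 2
  have h3 : Integrable (fun x => ‖gradient f x‖ ^ 2 + 2 * inner ℝ (gradient f x) (t • b)) μ :=
    hG.integrable_norm_sq.add h2
  simp_rw [norm_add_sq_real]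
  rw [integral_add h3 (integrable_const _), integral_add hG.integrable_norm_sq h2,
    integral_const_mul]
  have : ∫ x, inner ℝ (gradient f x) (t • b) ∂μ = t * ‖b‖ ^ 2 := by
    simp_rw [real_inner_comm (t • b)]
    rw [integral_inner hi, hb, inner_smul_left, real_inner_self_eq_norm_sq]
    simp
  rw [this]
  simp [norm_smul, mul_pow]
  ring

/-- Numerical core of the self-improvement of near-optimal functions. -/
theorem near_optimizer_contradiction {C K V D α β : ℝ} (hC : 0 ≤ C) (hD : 0 ≤ D) (hβ : 0 ≤ β)
    (hK : 3 / 4 * C + 3 / 8 < K) (hV : (K - 1 / 400) * D < V) (hVK : V ≤ K * D)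
    (hVC : V ≤ C * (3 / 4 * D + 1 / 4 * β))
    (hdisc : (K * β - α) ^ 2 ≤ (K * D - V) * ((K - 1) * β)) (hα : α ^ 2 ≤ V * β) : False := by
  have hD : 0 < D := by
    rcases hD.eq_or_lt with rfl | h
    · linarith
    · exact h
  have hK0 : 0 < K := by linarith
  have hR := Real.sqrt_nonneg (K * D * β)
  have hR2 : √(K * D * β) ^ 2 = K * D * β := Real.sq_sqrt (by positivity)
  set R := √(K * D * β)
  have h1 : α ≤ R := by
    refine le_of_sq_le_sq ?_ hR
    nlinarith
  have h2 : K * β - α ≤ R / 20 := by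
    refine le_of_sq_le_sq ?_ (by positivity)
    have a1 : (K * D - V) * ((K - 1) * β) ≤ (K * D - V) * (K * β) := by
      refine mul_le_mul_of_nonneg_left ?_ (by linarith)
      nlinarith
    have a2 : (K * D - V) * (K * β) ≤ (D / 400) * (K * β) :=
      mul_le_mul_of_nonneg_right (by linarith) (by positivity)
    nlinarith
  have h3 : K * β ≤ 21 / 20 * R := by linarith
  have h4 : K * β ≤ 441 / 400 * D := by
    rcases hβ.eq_or_lt with rfl | hβ
    · nlinarith
    · have : (K * β) * (K * β) ≤ (441 / 400 * D) * (K * β) := by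
        have := mul_self_le_mul_self (by positivity) h3
        nlinarith
      exact le_of_mul_le_mul_right this (by positivity)
  have h5 : C * β ≤ 4 / 3 * (K * β) := by nlinarith
  nlinarith

theorem poincareConst_doubling_le [IsProbabilityMeasure μ] (hp : poincareConst μ ≠ ⊤)
    (hiso : IsIsotropic (doubling μ)) :
    poincareConst (doubling μ) ≠ ⊤ ∧
      (poincareConst (doubling μ)).toReal ≤ 3 / 4 * (poincareConst μ).toReal + 3 / 8 := by
  have hP := poincareInequality_toReal hp
  have hC : 0 ≤ (poincareConst μ).toReal := ENNReal.toReal_nonneg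
  set C := (poincareConst μ).toReal
  have hG : ∀ f : EuclideanSpace ℝ (Fin d) → ℝ,
      ∫⁻ x, ‖gradient f x‖₊ ^ 2 ∂(doubling μ) ≠ ∞ → MemLp (gradient f) 2 (doubling μ) :=
    fun f hD => (memLp_two_iff_lintegral_ne_top (measurable_gradient f).aestronglyMeasurable).2 hD
  have hfin : poincareConst (doubling μ) ≠ ⊤ := by
    refine ne_top_of_le_ne_top ENNReal.ofReal_ne_top
      (poincareConst_le_ofReal (K := C + 1) (by linarith) fun f hf hD => ?_)
    obtain ⟨hf2, hle⟩ := doubling_variance_bound hC hP hf hD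
    rw [← hf2.ofReal_variance_eq, ← (hG f hD).ofReal_integral_norm_sq,
      ← ENNReal.ofReal_mul (by linarith)]
    refine ENNReal.ofReal_le_ofReal ?_
    nlinarith [norm_integral_sq_le (hG f hD), sq_nonneg ‖∫ x, gradient f x ∂(doubling μ)‖]
  refine ⟨hfin, ?_⟩
  by_contra! hlt
  have hP2 := poincareInequality_toReal hfin
  have hlt' : ENNReal.ofReal ((poincareConst (doubling μ)).toReal - 1 / 400) <
      poincareConst (doubling μ) := by
    conv_rhs => rw [← ENNReal.ofReal_toReal hfin]
    exact (ENNReal.ofReal_lt_ofReal_iff (by linarith)).2 (by linarith)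
  obtain ⟨f, hf, hD, hgt⟩ := exists_variance_gt_of_lt_poincareConst (by linarith) hlt'
  obtain ⟨hf2, hle⟩ := doubling_variance_bound hC hP hf hD
  set K := (poincareConst (doubling μ)).toReal
  rw [← hf2.ofReal_variance_eq, ← (hG f hD).ofReal_integral_norm_sq,
    ← ENNReal.ofReal_mul (by linarith)] at hgt
  have hgt := lt_of_not_ge fun h => absurd hgt (not_lt.2 (ENNReal.ofReal_le_ofReal h))
  have hquad := variance_add_linear_le hiso (by linarith) hP2 hf hf2 (hG f hD) rfl
  set b := ∫ x, gradient f x ∂(doubling μ)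
  have hpos : ∀ t : ℝ, 0 ≤ Var[f; doubling μ] +
      2 * t * cov[f, fun x => inner ℝ b x; doubling μ] + t ^ 2 * ‖b‖ ^ 2 := fun t => by
    rw [← hiso.variance_inner b, ← variance_add_mul hf2 (hiso.memLp_inner b)]
    exact variance_nonneg _ _
  set V := Var[f; doubling μ]
  set α := cov[f, fun x => inner ℝ b x; doubling μ]
  set D := ∫ x, ‖gradient f x‖ ^ 2 ∂(doubling μ)
  have hdisc := discrim_le_zero (a := (K - 1) * ‖b‖ ^ 2) (b := 2 * (K * ‖b‖ ^ 2 - α))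
    (c := K * D - V) fun t => by linarith [hquad t]
  have hcs := discrim_le_zero (a := ‖b‖ ^ 2) (b := 2 * α) (c := V) fun t => by linarith [hpos t]
  rw [discrim] at hdisc hcs
  have hVK := hquad 0
  exact near_optimizer_contradiction (C := C) (K := K) (V := V) (D := D) (α := α) (β := ‖b‖ ^ 2)
    hC (integral_nonneg fun x => by positivity) (by positivity) hlt hgt (by linarith) hle
    (by linarith) (by linarith)

theorem IsIsotropic.integral_apply (h : IsIsotropic μ) [IsProbabilityMeasure μ] (i : Fin d) :
    ∫ x, x i ∂μ = 0 := by
  have := (EuclideanSpace.proj (𝕜 := ℝ) i).integral_comp_comm (h.memLp_id.integrable one_le_two)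
  simpa [h.2.1] using this

theorem IsIsotropic.doubling [IsProbabilityMeasure μ] (h : IsIsotropic μ) :
    IsIsotropic (doubling μ) := by
  have hid := h.memLp_id
  have hfst : MemLp (fun p : EuclideanSpace ℝ (Fin d) × EuclideanSpace ℝ (Fin d) => p.1) 2
      (μ.prod μ) := hid.comp_fst μ
  have hsnd : MemLp (fun p : EuclideanSpace ℝ (Fin d) × EuclideanSpace ℝ (Fin d) => p.2) 2
      (μ.prod μ) := hid.comp_snd μ
  have hmeas := (measurable_doubling_map (E := EuclideanSpace ℝ (Fin d))).aemeasurable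
    (μ := μ.prod μ)
  refine ⟨?_, ?_, fun i j => ?_⟩
  · refine (memLp_two_iff_integrable_sq_norm (f := id) aestronglyMeasurable_id).1 ?_
    rw [_root_.doubling, memLp_map_measure_iff aestronglyMeasurable_id hmeas]
    exact (hfst.add hsnd).const_smul (√2)⁻¹
  · rw [_root_.doubling, integral_map (f := fun x => x) hmeas aestronglyMeasurable_id,
      integral_smul, integral_add (hfst.integrable one_le_two) (hsnd.integrable one_le_two),
      integral_fun_fst (fun x => x), integral_fun_snd (fun x => x), h.2.1]
    simp
  · have hf := fun k => hfst.euclidean_apply k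
    have hs := fun k => hsnd.euclidean_apply k
    have h1 : Integrable
        (fun p : EuclideanSpace ℝ (Fin d) × EuclideanSpace ℝ (Fin d) => p.1 i * p.1 j) (μ.prod μ) :=
      (hf i).integrable_mul (hf j)
    have h2 : Integrable
        (fun p : EuclideanSpace ℝ (Fin d) × EuclideanSpace ℝ (Fin d) => p.1 i * p.2 j) (μ.prod μ) :=
      (hf i).integrable_mul (hs j)
    have h3 : Integrable
        (fun p : EuclideanSpace ℝ (Fin d) × EuclideanSpace ℝ (Fin d) => p.1 j * p.2 i) (μ.prod μ) :=
      (hf j).integrable_mul (hs i)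
    have h4 : Integrable
        (fun p : EuclideanSpace ℝ (Fin d) × EuclideanSpace ℝ (Fin d) => p.2 i * p.2 j) (μ.prod μ) :=
      (hs i).integrable_mul (hs j)
    have e1 := integral_fun_fst (μ := μ) (ν := μ) (fun x => x i * x j)
    have e4 := integral_fun_snd (μ := μ) (ν := μ) (fun x => x i * x j)
    have e2 := integral_prod_mul (μ := μ) (ν := μ) (fun x => x i) (fun x => x j)
    have e3 := integral_prod_mul (μ := μ) (ν := μ) (fun x => x j) (fun x => x i)
    rw [_root_.doubling, integral_map hmeas (by fun_prop)]
    have hexp : ∀ p : EuclideanSpace ℝ (Fin d) × EuclideanSpace ℝ (Fin d),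
        ((√2)⁻¹ • (p.1 + p.2)) i * ((√2)⁻¹ • (p.1 + p.2)) j =
          2⁻¹ * (p.1 i * p.1 j + p.1 i * p.2 j + p.1 j * p.2 i + p.2 i * p.2 j) := by
      intro p
      have : (√2)⁻¹ * (√2)⁻¹ = (2 : ℝ)⁻¹ := by
        rw [← mul_inv, Real.mul_self_sqrt zero_le_two]
      simp only [PiLp.smul_apply, PiLp.add_apply, smul_eq_mul]
      rw [mul_mul_mul_comm, this]
      ring
    simp_rw [hexp]
    have h12 := integral_add h1 h2
    have h123 := integral_add (h1.add h2) h3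
    have h1234 := integral_add ((h1.add h2).add h3) h4
    simp only [Pi.add_apply] at h12 h123 h1234
    rw [integral_const_mul, h1234, h123, h12, e1, e2, e3, e4, h.2.2,
      h.integral_apply, h.integral_apply]
    split_ifs <;> norm_num

theorem charFun_stdSumLaw [IsProbabilityMeasure μ] (n : ℕ) (t : EuclideanSpace ℝ (Fin d)) :
    charFun (stdSumLaw μ n) t = charFun μ ((√n)⁻¹ • t) ^ n := by
  have : stdSumLaw μ n = ((Measure.pi fun _ : Fin n => μ).map fun x => ∑ i, x i).map
      fun y => (√n)⁻¹ • y := by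
    rw [Measure.map_map (by fun_prop) (by fun_prop)]
    rfl
  rw [this, charFun_map_smul, charFun_map_sum_pi_eq_prod]
  simp

theorem charFun_doubling [IsProbabilityMeasure μ] (t : EuclideanSpace ℝ (Fin d)) :
    charFun (doubling μ) t = charFun μ ((√2)⁻¹ • t) ^ 2 := by
  have : doubling μ = (μ ∗ μ).map fun y => (√2)⁻¹ • y := by
    rw [Measure.conv, Measure.map_map (by fun_prop) (by fun_prop)]
    rfl
  rw [this, charFun_map_smul, charFun_conv, sq]

instance isProbabilityMeasure_stdSumLaw [IsProbabilityMeasure μ] (n : ℕ) :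
    IsProbabilityMeasure (stdSumLaw μ n) :=
  Measure.isProbabilityMeasure_map (by fun_prop)

theorem stdSumLaw_one [IsProbabilityMeasure μ] : stdSumLaw μ 1 = μ :=
  Measure.ext_of_charFun <| funext fun t => by simp [charFun_stdSumLaw]

theorem stdSumLaw_mul_two [IsProbabilityMeasure μ] (n : ℕ) :
    stdSumLaw μ (n * 2) = doubling (stdSumLaw μ n) :=
  Measure.ext_of_charFun <| funext fun t => by
    rw [charFun_doubling, charFun_stdSumLaw, charFun_stdSumLaw, smul_smul, ← pow_mul]
    simp [mul_comm]

theorem poincareConst_stdSumLaw_two_pow [IsProbabilityMeasure μ] (hiso : IsIsotropic μ)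
    (hp : poincareConst μ ≠ ⊤) (n : ℕ) :
    IsIsotropic (stdSumLaw μ (2 ^ n)) ∧ poincareConst (stdSumLaw μ (2 ^ n)) ≠ ⊤ ∧
      (poincareConst (stdSumLaw μ (2 ^ n))).toReal - 3 / 2 ≤
        (3 / 4 : ℝ) ^ n * ((poincareConst μ).toReal - 3 / 2) := by
  induction n with
  | zero => simpa [stdSumLaw_one] using ⟨hiso, hp⟩
  | succ n ih =>
    obtain ⟨hiso, hp, hle⟩ := ih
    have hiso' := hiso.doubling
    obtain ⟨hp', hle'⟩ := poincareConst_doubling_le hp hiso'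
    rw [pow_succ, stdSumLaw_mul_two]
    refine ⟨hiso', hp', ?_⟩
    rw [pow_succ]
    linarith

end Euclidean

/-- **Fast initial convergence of the Poincaré constant along the CLT.** For i.i.d. isotropic
random vectors with law `ν₁` of finite Poincaré constant, the Poincaré constants of the
standardized sums `ν_{2^n}` satisfy `C_p(ν_{2^n}) − 3/2 ≤ (3/4)^n (C_p(ν₁) − 3/2)`. -/
theorem poincareConst_doubling_decay {d : ℕ} (ν₁ : Measure (EuclideanSpace ℝ (Fin d)))
    [IsProbabilityMeasure ν₁] (hiso : IsIsotropic ν₁) (hp : poincareConst ν₁ ≠ ⊤) (n : ℕ) :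
    poincareConst (stdSumLaw ν₁ (2 ^ n)) ≠ ⊤ ∧
      (poincareConst (stdSumLaw ν₁ (2 ^ n))).toReal - 3 / 2 ≤
        (3 / 4 : ℝ) ^ n * ((poincareConst ν₁).toReal - 3 / 2) := by
  exact (poincareConst_stdSumLaw_two_pow hiso hp n).2
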